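/- Let X be a Polish space without isolated points, Σ = Perf the family of all nonempty perfect subsets of X, and f : X → ℝ. Then the game G_1(Σ,f) is determined; moreover, if f is Marczewski measurable then Player II has a winning strategy in G_1(Σ,f), and if f is not Marczewski measurable then Player I has a winning strategy in G_1(Σ,f). -/

import Mathlib

/-!
Call `f` *separated* (`Separated`) if for all reals `a < b` every nonempty perfect set has a
nonempty perfect subset on which `f > a` throughout or `f < b` throughout. Everything turns on the
equivalence of this property with Marczewski measurability.

* If `f` is not separated, some perfect `P` and `a < b` are such that every perfect `Q ⊆ P` has
  points with `f ≤ a` and points with `f ≥ b`. Player I opens with `P` and alternates between the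
  two kinds of points, so `f (x n)` diverges (`winI_of_not_separated`).
* If `f` is separated, every perfect set has perfect subsets on which `f` has arbitrarily small
  oscillation (`Separated.small_osc`): first make `f` bounded, then cut the range down by a factor
  `2/3` repeatedly. Player II plays a decreasing sequence of perfect sets whose diameters and
  oscillations of `f` tend to `0`. The points of Player I then converge to a point `y` common to all
  these sets, and `f (x n)` tends to `f y` (`winII_of_small_osc`).
* Measurability gives separation by looking at `f ⁻¹' (a, ∞)`. Conversely, suppose `f` is separated,
  `U` is open and the perfect set `P` has no perfect subset inside `f ⁻¹' U`. Every perfect subset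
  of `P` has a perfect subset on which `f` oscillates by at most `1 / (n + 1)`, and there `f` stays
  within `1 / (n + 1)` of `Uᶜ`. A fusion argument (`exists_perfect_subset_iInter`) provides one
  perfect subset of `P` on which `f` has distance `0` from the closed set `Uᶜ`.

The fusion lemma is a Cantor scheme whose `n`-th level lies inside the `n`-th prescribed set. It
also serves to make `f` bounded: otherwise it would yield a perfect set with `|f| > n` for all `n`.
-/

open Filter Topology

/-- Player II has a winning strategy in the point-set game `G₁(Σ, f)`:
there is a strategy `σ` (assigning to the initial set `P` played by Player I and the finite
sequence of points played so far by Player I a set, intended as Player II's next move) such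
that all its moves are legal (members of `Σ` that are subsets of `P`) and for every run
`x : ℕ → X` of Player I that is legal against `σ` (i.e. `x n` belongs to the set played by
Player II at the previous stage), the sequence `x` converges to some `y` and `f ∘ x`
converges to `f y`. -/
def G1WinII {X : Type*} [MetricSpace X] (S : Set (Set X)) (f : X → ℝ) : Prop :=
  ∃ σ : Set X → List X → Set X,
    ∀ P ∈ S,
      (∀ h : List X, σ P h ∈ S ∧ σ P h ⊆ P) ∧
      ∀ x : ℕ → X,
        (∀ n : ℕ, x n ∈ σ P (List.ofFn fun i : Fin n => x i.1)) →
        ∃ y : X, Tendsto x atTop (nhds y) ∧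
          Tendsto (fun n => f (x n)) atTop (nhds (f y))

/-- Player I has a winning strategy in the point-set game `G₁(Σ, f)`:
there are an initial move `P ∈ Σ` and a strategy `τ` (assigning a point to every finite
sequence of sets played so far by Player II) such that against every legal play
`Q : ℕ → Set X` of Player II (each `Q n ∈ Σ`, `Q n ⊆ P`), all moves of `τ` are legal
(the point played after seeing `Q 0, …, Q n` lies in `Q n`) and the resulting sequence of
points does NOT converge to a point `y` with `f`-values converging to `f y`. -/
def G1WinI {X : Type*} [MetricSpace X] (S : Set (Set X)) (f : X → ℝ) : Prop :=
  ∃ P ∈ S, ∃ τ : List (Set X) → X,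
    ∀ Q : ℕ → Set X,
      (∀ n : ℕ, Q n ∈ S ∧ Q n ⊆ P) →
      (∀ n : ℕ, τ (List.ofFn fun i : Fin (n + 1) => Q i.1) ∈ Q n) ∧
      ¬ ∃ y : X,
          Tendsto (fun n => τ (List.ofFn fun i : Fin (n + 1) => Q i.1)) atTop (nhds y) ∧
          Tendsto (fun n => f (τ (List.ofFn fun i : Fin (n + 1) => Q i.1))) atTop
            (nhds (f y))

/-- The family of all nonempty perfect subsets of `X` (closed sets with no isolated
points). -/
def PerfFam (X : Type*) [TopologicalSpace X] : Set (Set X) :=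
  {P : Set X | Perfect P ∧ P.Nonempty}

/-- `E` is an (s)-set (Marczewski measurable set): every nonempty perfect set `P` has a
nonempty perfect subset `Q` with `Q ⊆ E` or `Q ⊆ P \\ E`. -/
def IsSSet {X : Type*} [TopologicalSpace X] (E : Set X) : Prop :=
  ∀ P : Set X, Perfect P → P.Nonempty →
    ∃ Q : Set X, Perfect Q ∧ Q.Nonempty ∧ Q ⊆ P ∧ (Q ⊆ E ∨ Q ⊆ P \ E)

/-- `f` is Marczewski measurable: preimages of open sets are (s)-sets. -/
def MarczewskiMeasurable {X : Type*} [TopologicalSpace X] (f : X → ℝ) : Prop :=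
  ∀ U : Set ℝ, IsOpen U → IsSSet (f ⁻¹' U)

open Set

/-- Every nonempty perfect set has a nonempty perfect subset on which `f > a`, or one on which
`f < b`, whenever `a < b`. -/
def Separated {X : Type*} [TopologicalSpace X] (f : X → ℝ) : Prop :=
  ∀ a b : ℝ, a < b → ∀ P ∈ PerfFam X,
    ∃ Q ∈ PerfFam X, Q ⊆ P ∧ ((∀ x ∈ Q, a < f x) ∨ (∀ x ∈ Q, f x < b))

/-- Every nonempty perfect set has nonempty perfect subsets on which `f` has arbitrarily small
oscillation. -/
def SmallOsc {X : Type*} [TopologicalSpace X] (f : X → ℝ) : Prop :=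
  ∀ ε : ℝ, 0 < ε → ∀ P ∈ PerfFam X,
    ∃ Q ∈ PerfFam X, Q ⊆ P ∧ ∀ x ∈ Q, ∀ y ∈ Q, |f x - f y| ≤ ε

/-- Fusion: if below `P` every perfect set can be shrunk into each `E n` separately, then some
perfect subset of `P` lies in all `E n` at once. -/
theorem exists_perfect_subset_iInter {X : Type*} [MetricSpace X] [CompleteSpace X]
    [TopologicalSpace.SeparableSpace X] {P : Set X} (hP : P ∈ PerfFam X) (E : ℕ → Set X)
    (hE : ∀ n, ∀ C ∈ PerfFam X, C ⊆ P → ∃ Q ∈ PerfFam X, Q ⊆ C ∧ Q ⊆ E n) :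
    ∃ Q ∈ PerfFam X, Q ⊆ P ∧ ∀ n, Q ⊆ E n := by
  have : SecondCountableTopology X := UniformSpace.secondCountable_of_separable X
  obtain ⟨u, -, upos', hu⟩ := exists_seq_strictAnti_tendsto' (zero_lt_one' ENNReal)
  have upos := fun n => (upos' n).1
  let PP := {C : Set X // C ∈ PerfFam X ∧ C ⊆ P}
  have step : ∀ (C : PP) (n : ℕ), ∃ D : Bool → PP,
      (∀ b, (D b).1 ⊆ C.1 ∧ Metric.ediam (D b).1 ≤ u n ∧ (D b).1 ⊆ E n) ∧
      Disjoint (D false).1 (D true).1 := by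
    rintro ⟨C, ⟨hC, hCne⟩, hCP⟩ n
    obtain ⟨C₀, C₁, ⟨h0p, h0n, h0s, h0d⟩, ⟨h1p, h1n, h1s, h1d⟩, hd⟩ :=
      hC.small_diam_splitting hCne (upos n)
    obtain ⟨Q₀, hQ₀, hs₀, he₀⟩ := hE n C₀ ⟨h0p, h0n⟩ (h0s.trans hCP)
    obtain ⟨Q₁, hQ₁, hs₁, he₁⟩ := hE n C₁ ⟨h1p, h1n⟩ (h1s.trans hCP)
    refine ⟨fun b => cond b ⟨Q₁, hQ₁, hs₁.trans (h1s.trans hCP)⟩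
      ⟨Q₀, hQ₀, hs₀.trans (h0s.trans hCP)⟩, ?_, hd.mono hs₀ hs₁⟩
    rintro (_ | _)
    · exact ⟨hs₀.trans h0s, (Metric.ediam_mono hs₀).trans h0d, he₀⟩
    · exact ⟨hs₁.trans h1s, (Metric.ediam_mono hs₁).trans h1d, he₁⟩
  choose D hD hdisj using step
  let DP : List Bool → PP := fun l =>
    List.rec ⟨P, hP, Subset.rfl⟩ (fun a l ih => D ih l.length a) l
  let A : List Bool → Set X := fun l => (DP l).1
  have hAcons : ∀ l a, A (a :: l) = (D (DP l) l.length a).1 := fun _ _ => rfl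
  have hanti : CantorScheme.ClosureAntitone A := by
    refine CantorScheme.Antitone.closureAntitone ?_ fun l => (DP l).2.1.1.closed
    intro l a
    exact (hD _ _ _).1
  have hdiam : CantorScheme.VanishingDiam A := by
    intro x
    rw [← tendsto_add_atTop_iff_nat 1]
    refine tendsto_of_tendsto_of_tendsto_of_le_of_le tendsto_const_nhds hu
      (fun _ => zero_le) fun n => ?_
    have := (hD (DP (PiNat.res x n)) (PiNat.res x n).length (x n)).2.1
    rw [← hAcons, PiNat.res_length] at this
    exact this
  have hdisj' : CantorScheme.Disjoint A := by
    rintro l (a | a) (b | b) hab <;> try contradiction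
    · exact hdisj _ _
    · exact (hdisj _ _).symm
  have hdom : ∀ {x : ℕ → Bool}, x ∈ (CantorScheme.inducedMap A).1 := fun {x} => by
    rw [hanti.map_of_vanishingDiam hdiam fun l => (DP l).2.1.2]
    apply mem_univ
  let g : (ℕ → Bool) → X := fun x => (CantorScheme.inducedMap A).2 ⟨x, hdom⟩
  have gcont : Continuous g := hdiam.map_continuous.comp (by fun_prop)
  have ginj : Function.Injective g := by
    intro x y hxy
    simpa only [← Subtype.val_inj] using hdisj'.map_injective hxy
  have gmem : ∀ x n, g x ∈ A (PiNat.res x n) := fun x n => CantorScheme.map_mem ⟨x, hdom⟩ n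
  have hcard : Cardinal.aleph0 < Cardinal.mk (ℕ → Bool) := by
    simpa using Cardinal.cantor Cardinal.aleph0
  have hunc : ¬ (range g).Countable := by
    intro h
    have h' : Countable (ℕ → Bool) := by
      rw [← image_univ] at h
      exact countable_univ_iff.1 (countable_of_injective_of_countable_image ginj.injOn h)
    exact (Cardinal.mk_le_aleph0_iff.2 h').not_gt hcard
  obtain ⟨Q, hQ, hQn, hQs⟩ := exists_perfect_nonempty_of_isClosed_of_not_countable
    (isCompact_range gcont).isClosed hunc
  refine ⟨Q, ⟨hQ, hQn⟩, fun y hy => ?_, fun n y hy => ?_⟩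
  · obtain ⟨x, rfl⟩ := hQs hy
    exact gmem x 0
  · obtain ⟨x, rfl⟩ := hQs hy
    have := (hD (DP (PiNat.res x n)) (PiNat.res x n).length (x n)).2.2
    rw [← hAcons, PiNat.res_length] at this
    exact this (gmem x (n + 1))

theorem MarczewskiMeasurable.separated {X : Type*} [TopologicalSpace X] {f : X → ℝ}
    (hf : MarczewskiMeasurable f) : Separated f := by
  rintro a b hab P ⟨hP, hPn⟩
  obtain ⟨Q, hQ, hQn, hQP, h | h⟩ := hf (Ioi a) isOpen_Ioi P hP hPn
  · exact ⟨Q, ⟨hQ, hQn⟩, hQP, Or.inl fun x hx => h hx⟩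
  · refine ⟨Q, ⟨hQ, hQn⟩, hQP, Or.inr fun x hx => ?_⟩
    have : ¬ a < f x := (h hx).2
    linarith

/-- A separated function is bounded on a perfect subset of any given perfect set; otherwise fusion
would produce a perfect set on which `|f| > n` for every `n`. -/
theorem Separated.exists_bounded {X : Type*} [MetricSpace X] [CompleteSpace X]
    [TopologicalSpace.SeparableSpace X] {f : X → ℝ} (hf : Separated f)
    {P : Set X} (hP : P ∈ PerfFam X) :
    ∃ Q ∈ PerfFam X, Q ⊆ P ∧ ∃ N : ℝ, ∀ x ∈ Q, |f x| ≤ N := by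
  by_contra! hcon
  obtain ⟨Q, ⟨-, x, hx⟩, -, hQ⟩ :=
    exists_perfect_subset_iInter hP (fun n : ℕ => {x | (n : ℝ) < |f x|}) (by
      intro n C hC hCP
      obtain ⟨Q, hQ, hQC, h | h⟩ := hf n (n + 1) (by linarith) C hC
      · exact ⟨Q, hQ, hQC, fun x hx => (h x hx).trans_le (le_abs_self _)⟩
      obtain ⟨R, hR, hRQ, h' | h'⟩ := hf (-(n + 1)) (-n) (by linarith) Q hQ
      · obtain ⟨x, hx, hlt⟩ := hcon R hR (hRQ.trans (hQC.trans hCP)) (n + 1)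
        exact absurd (abs_le.2 ⟨(h' x hx).le, (h x (hRQ hx)).le⟩) hlt.not_ge
      · refine ⟨R, hR, hRQ.trans hQC, fun x hx => ?_⟩
        have h1 := h' x hx
        have h2 := neg_le_abs (f x)
        show (n : ℝ) < |f x|
        linarith)
  obtain ⟨n, hn⟩ := exists_nat_gt |f x|
  exact lt_asymm hn (hQ n hx)

theorem Separated.small_osc {X : Type*} [MetricSpace X] [CompleteSpace X]
    [TopologicalSpace.SeparableSpace X] {f : X → ℝ} (hf : Separated f) : SmallOsc f := by
  intro ε hε P hP
  -- Separating at the two trisection points of an interval leaves an interval of `2/3` the length.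
  have key : ∀ k : ℕ, ∀ C ∈ PerfFam X, ∀ c : ℝ,
      (∀ x ∈ C, c ≤ f x ∧ f x ≤ c + ε * (3 / 2) ^ k) →
      ∃ Q ∈ PerfFam X, Q ⊆ C ∧ ∃ c' : ℝ, ∀ x ∈ Q, c' ≤ f x ∧ f x ≤ c' + ε := by
    intro k
    induction k with
    | zero => exact fun C hC c h => ⟨C, hC, Subset.rfl, c, by simpa using h⟩
    | succ k ih =>
      intro C hC c h
      have hL : 0 < ε * (3 / 2) ^ k := by positivity
      set L := ε * (3 / 2) ^ k with hLdef
      have hpow : ε * (3 / 2) ^ (k + 1) = L * (3 / 2) := by rw [hLdef]; ring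
      rw [hpow] at h
      obtain ⟨Q, hQ, hQC, h' | h'⟩ := hf (c + L / 2) (c + L) (by linarith) C hC
      · obtain ⟨R, hR, hRQ, hR'⟩ := ih Q hQ (c + L / 2) (fun x hx =>
          ⟨(h' x hx).le, by have := (h x (hQC hx)).2; linarith⟩)
        exact ⟨R, hR, hRQ.trans hQC, hR'⟩
      · obtain ⟨R, hR, hRQ, hR'⟩ := ih Q hQ c (fun x hx =>
          ⟨(h x (hQC hx)).1, (h' x hx).le⟩)
        exact ⟨R, hR, hRQ.trans hQC, hR'⟩
  obtain ⟨C, hC, hCP, N, hN⟩ := hf.exists_bounded hP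
  obtain ⟨k, hk⟩ := pow_unbounded_of_one_lt (2 * N / ε) (by norm_num : (1 : ℝ) < 3 / 2)
  rw [div_lt_iff₀ hε] at hk
  obtain ⟨Q, hQ, hQC, c, hc⟩ := key k C hC (-N) (fun x hx => by
    have := abs_le.1 (hN x hx)
    constructor <;> linarith)
  refine ⟨Q, hQ, hQC.trans hCP, fun x hx y hy => ?_⟩
  have h1 := hc x hx
  have h2 := hc y hy
  rw [abs_le]
  constructor <;> linarith

theorem SmallOsc.marczewskiMeasurable {X : Type*} [MetricSpace X] [CompleteSpace X]
    [TopologicalSpace.SeparableSpace X] {f : X → ℝ} (hf : SmallOsc f) :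
    MarczewskiMeasurable f := by
  intro U hU P hP hPn
  by_cases hin : ∃ Q ∈ PerfFam X, Q ⊆ P ∧ Q ⊆ f ⁻¹' U
  · obtain ⟨Q, ⟨hQ, hQn⟩, hQP, hQU⟩ := hin
    exact ⟨Q, hQ, hQn, hQP, Or.inl hQU⟩
  push Not at hin
  obtain ⟨Q, ⟨hQ, hQn⟩, hQP, hQE⟩ := exists_perfect_subset_iInter ⟨hP, hPn⟩
    (fun n : ℕ => {x | ∃ z ∉ U, |f x - z| ≤ 1 / ((n : ℝ) + 1)}) (by
      intro n C hC hCP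
      obtain ⟨Q, hQ, hQC, hosc⟩ := hf (1 / ((n : ℝ) + 1)) (by positivity) C hC
      obtain ⟨y, hy, hyU⟩ := not_subset.1 (hin Q hQ (hQC.trans hCP))
      exact ⟨Q, hQ, hQC, fun x hx => ⟨f y, hyU, hosc x hx y hy⟩⟩)
  refine ⟨Q, hQ, hQn, hQP, Or.inr fun x hx => ⟨hQP hx, fun hxU => ?_⟩⟩
  obtain ⟨ε, hε, hball⟩ := Metric.isOpen_iff.1 hU (f x) hxU
  obtain ⟨n, hn⟩ := exists_nat_one_div_lt hε
  obtain ⟨z, hz, hle⟩ := hQE n hx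
  refine hz (hball ?_)
  rw [Metric.mem_ball, dist_comm, Real.dist_eq]
  exact hle.trans_lt hn

/-- Player II can ignore the points of Player I: the moves form a fixed decreasing sequence of
perfect sets on which both the diameter and the oscillation of `f` tend to `0`. -/
theorem winII_of_small_osc {X : Type*} [MetricSpace X] [CompleteSpace X]
    {f : X → ℝ} (hf : SmallOsc f) : G1WinII (PerfFam X) f := by
  have step : ∀ (C : PerfFam X) (n : ℕ), ∃ D : PerfFam X, D.1 ⊆ C.1 ∧
      (∀ x ∈ D.1, ∀ y ∈ D.1, dist x y ≤ 1 / ((n : ℝ) + 1)) ∧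
      ∀ x ∈ D.1, ∀ y ∈ D.1, |f x - f y| ≤ 1 / ((n : ℝ) + 1) := by
    rintro ⟨C, hC, hCn⟩ n
    have hpos : (0 : ℝ) < 1 / ((n : ℝ) + 1) := by positivity
    obtain ⟨C₀, -, ⟨hp, hn, hs, hd⟩, -⟩ :=
      hC.small_diam_splitting hCn (ENNReal.ofReal_pos.2 hpos)
    obtain ⟨Q, hQ, hQC, hosc⟩ := hf _ hpos C₀ ⟨hp, hn⟩
    refine ⟨⟨Q, hQ⟩, hQC.trans hs, fun x hx y hy => ?_, hosc⟩
    have := (Metric.edist_le_ediam_of_mem (hQC hx) (hQC hy)).trans hd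
    rwa [edist_dist, ENNReal.ofReal_le_ofReal_iff hpos.le] at this
  choose D hDs hDd hDf using step
  let S : PerfFam X → ℕ → PerfFam X := fun P n => Nat.rec (D P 0) (fun k C => D C (k + 1)) n
  have hSs : ∀ P n, (S P (n + 1)).1 ⊆ (S P n).1 := fun P n => hDs _ _
  have hS : ∀ P n, ∃ C, S P n = D C n := by
    rintro P (_ | n)
    · exact ⟨P, rfl⟩
    · exact ⟨_, rfl⟩
  have hanti : ∀ P, Antitone fun n => (S P n).1 := fun P => antitone_nat_of_succ_le (hSs P)
  classical
  refine ⟨fun P h => if hP : P ∈ PerfFam X then (S ⟨P, hP⟩ h.length).1 else P, fun P hP => ?_⟩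
  simp only [hP, dif_pos, List.length_ofFn]
  have hSP : ∀ n, (S ⟨P, hP⟩ n).1 ⊆ P := fun n =>
    (hanti ⟨P, hP⟩ (Nat.zero_le n)).trans (hDs _ _)
  refine ⟨fun h => ⟨(S ⟨P, hP⟩ h.length).2, hSP _⟩, fun x hx => ?_⟩
  have hdist : ∀ n, ∀ p ∈ (S ⟨P, hP⟩ n).1, ∀ q ∈ (S ⟨P, hP⟩ n).1,
      dist p q ≤ 1 / ((n : ℝ) + 1) := by
    intro n
    obtain ⟨C, hC⟩ := hS ⟨P, hP⟩ n
    rw [hC]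
    exact hDd C n
  have hosc : ∀ n, ∀ p ∈ (S ⟨P, hP⟩ n).1, ∀ q ∈ (S ⟨P, hP⟩ n).1,
      |f p - f q| ≤ 1 / ((n : ℝ) + 1) := by
    intro n
    obtain ⟨C, hC⟩ := hS ⟨P, hP⟩ n
    rw [hC]
    exact hDf C n
  have hmem : ∀ n m, n ≤ m → x m ∈ (S ⟨P, hP⟩ n).1 := fun n m hnm => hanti ⟨P, hP⟩ hnm (hx m)
  have hcauchy : CauchySeq x := cauchySeq_of_le_tendsto_0 _
    (fun n m N hn hm => hdist N _ (hmem N n hn) _ (hmem N m hm))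
    tendsto_one_div_add_atTop_nhds_zero_nat
  obtain ⟨y, hy⟩ := cauchySeq_tendsto_of_complete hcauchy
  have hyS : ∀ n, y ∈ (S ⟨P, hP⟩ n).1 := fun n =>
    (S ⟨P, hP⟩ n).2.1.closed.mem_of_tendsto hy (eventually_atTop.2 ⟨n, hmem n⟩)
  refine ⟨y, hy, ?_⟩
  rw [tendsto_iff_dist_tendsto_zero]
  exact squeeze_zero (fun _ => dist_nonneg) (fun n => hosc n _ (hx n) _ (hyS n))
    tendsto_one_div_add_atTop_nhds_zero_nat

/-- Player I alternates between points with `f ≤ a` and points with `f ≥ b`, according to the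
parity of the number of sets played so far. -/
theorem winI_of_not_separated {X : Type*} [MetricSpace X] {f : X → ℝ} (hf : ¬ Separated f) :
    G1WinI (PerfFam X) f := by
  unfold Separated at hf
  push Not at hf
  obtain ⟨a, b, hab, P, hP, h⟩ := hf
  obtain ⟨p, -⟩ := hP.2
  have hlow : ∀ Q : Set X, ∃ x, Q ∈ PerfFam X → Q ⊆ P → x ∈ Q ∧ f x ≤ a := fun Q => by
    by_cases hQ : Q ∈ PerfFam X ∧ Q ⊆ P
    · obtain ⟨⟨x, hx⟩, -⟩ := h Q hQ.1 hQ.2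
      exact ⟨x, fun _ _ => hx⟩
    · exact ⟨p, fun h1 h2 => absurd ⟨h1, h2⟩ hQ⟩
  have hhigh : ∀ Q : Set X, ∃ x, Q ∈ PerfFam X → Q ⊆ P → x ∈ Q ∧ b ≤ f x := fun Q => by
    by_cases hQ : Q ∈ PerfFam X ∧ Q ⊆ P
    · obtain ⟨-, ⟨x, hx⟩⟩ := h Q hQ.1 hQ.2
      exact ⟨x, fun _ _ => hx⟩
    · exact ⟨p, fun h1 h2 => absurd ⟨h1, h2⟩ hQ⟩
  choose lo hlo using hlow
  choose hi hhi using hhigh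
  refine ⟨P, hP, fun l => if Even l.length then lo (l.getLastD ∅) else hi (l.getLastD ∅),
    fun Q hQ => ?_⟩
  have hlast : ∀ n, (List.ofFn fun i : Fin (n + 1) => Q i.1).getLastD ∅ = Q n := by
    intro n
    rw [List.ofFn_succ', List.concat_eq_append, List.getLastD_concat]
    simp
  simp only [List.length_ofFn, hlast]
  refine ⟨fun n => ?_, ?_⟩
  · split_ifs
    · exact (hlo (Q n) (hQ n).1 (hQ n).2).1
    · exact (hhi (Q n) (hQ n).1 (hQ n).2).1
  rintro ⟨y, -, hy⟩
  have hle : f y ≤ a := by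
    refine le_of_tendsto_of_frequently hy (frequently_atTop.2 fun N => ⟨2 * N + 1, by omega, ?_⟩)
    rw [if_pos (by simp [parity_simps])]
    exact (hlo _ (hQ _).1 (hQ _).2).2
  have hge : b ≤ f y := by
    refine ge_of_tendsto_of_frequently hy (frequently_atTop.2 fun N => ⟨2 * N, by omega, ?_⟩)
    rw [if_neg (by simp [parity_simps])]
    exact (hhi _ (hQ _).1 (hQ _).2).2
  linarith

/-- Let `X` be a Polish space (here: a complete separable metric space) without isolated
points and `S = Perf` the family of all nonempty perfect subsets of `X`. The game
`G₁(S, f)` is determined; if `f` is Marczewski measurable then Player II has a winning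
strategy, and otherwise Player I has a winning strategy. -/
theorem game_marczewski_characterization {X : Type*} [MetricSpace X] [CompleteSpace X]
    [TopologicalSpace.SeparableSpace X]
    (hiso : ∀ x : X, (nhdsWithin x {x}ᶜ).NeBot) (f : X → ℝ) :
    (G1WinI (PerfFam X) f ∨ G1WinII (PerfFam X) f) ∧
    (MarczewskiMeasurable f → G1WinII (PerfFam X) f) ∧
    (¬ MarczewskiMeasurable f → G1WinI (PerfFam X) f) := by
  have hII : MarczewskiMeasurable f → G1WinII (PerfFam X) f := fun h =>
    winII_of_small_osc h.separated.small_osc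
  have hI : ¬ MarczewskiMeasurable f → G1WinI (PerfFam X) f := fun h =>
    winI_of_not_separated fun hs => h hs.small_osc.marczewskiMeasurable
  refine ⟨?_, hII, hI⟩
  by_cases h : MarczewskiMeasurable f
  · exact Or.inr (hII h)
  · exact Or.inl (hI h)
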